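/- There exists a constant C > 0 such that for all x ∈ ℝ³, ∫_{ℝ³} [e^{−|x−y|}/|x−y|²] · [e^{−|y|}/(|y|^{1.5+ε}+1)] dy ≤ C e^{−|x|}/(|x|^{1.5}+1), for any fixed ε > 0 (with C depending only on ε). -/

import Mathlib

set_option autoImplicit false

open MeasureTheory

/-!
By the triangle inequality the product `exp (-‖x - y‖) * exp (-‖y‖)` is at most `exp (-‖x‖)`, and
the excess is distributed between the two singularities: if `e` is the direction of `x`, then
`‖x - y‖ + ‖y‖ - ‖x‖ = (‖y‖ - ⟪e, y⟫) + (‖x - y‖ - ⟪e, x - y⟫)` with both terms nonnegative.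
Together with an elementary inequality for the powers, this bounds the integrand by
`C * exp (-‖x‖) / (‖x‖ ^ α + 1)` times `k y + k (x - y)`, where
`k y = ‖y‖ ^ (-p) * exp (-(‖y‖ - ⟪e, y⟫))`.

In dimension `n` the exponential localizes `k` to the paraboloid `‖z‖ ^ 2 ≲ ⟪e, y⟫`, where `z` is
the component of `y` orthogonal to `e`, so `k` is integrable as soon as `(n + 1) / 2 < p < n`. For
`n = 3` and kernel exponent `2` this is the borderline case, and the extra decay `ε` of the weight
allows `p > 2`. Integrability is proved in orthonormal coordinates adapted to `e`: since
`‖y‖ - ⟪e, y⟫ ≥ ‖z‖ ^ 2 / (2 * ‖y‖)`, the exponential is at most a product of Gaussians in the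
coordinates of `z`, and trading each Gaussian for a power bounds `k` by a product of integrable
functions of one variable.
-/

open Module Real Set
open scoped RealInnerProductSpace

noncomputable section

/-- A weight on the line, equal to `|s| ^ (δ - 1)` for `|s| ≤ 1` and to `|s| ^ (-δ - 1)` for
`|s| ≥ 1`. Products of such weights over the coordinates dominate the kernel `tiltedKernel`
away from the coordinate hyperplanes; on these the bound may fail because `0 ^ (δ - 1) = 0` for
`δ ≠ 1`. -/
def coordWeight (δ s : ℝ) : ℝ := |s| ^ (δ - 1) * max 1 |s| ^ (-2 * δ)

/-- The kernel `‖y‖ ^ (-p) * exp (-‖y‖)` tilted by the exponential `exp ⟪e, y⟫`. It is used for unit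
vectors `e`, where the exponential decay is cancelled exactly in the direction of `e`. -/
def tiltedKernel {E : Type*} [NormedAddCommGroup E] [InnerProductSpace ℝ E] (p : ℝ) (e y : E) : ℝ :=
  ‖y‖ ^ (-p) * exp (-(‖y‖ - ⟪e, y⟫))

section CoordWeight

variable {δ s r : ℝ}

lemma coordWeight_nonneg (δ s : ℝ) : 0 ≤ coordWeight δ s := by
  unfold coordWeight; positivity

lemma coordWeight_of_abs_le_one (hs : |s| ≤ 1) : coordWeight δ s = |s| ^ (δ - 1) := by
  simp [coordWeight, hs]

lemma coordWeight_of_one_le_abs (hs : 1 ≤ |s|) : coordWeight δ s = |s| ^ (-δ - 1) := by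
  rw [coordWeight, max_eq_right hs, ← rpow_add (by positivity)]
  ring_nf

lemma rpow_mul_rpow_le_coordWeight (hδ : 0 ≤ δ) (hr : 1 ≤ r) (hs : |s| ≤ r) :
    |s| ^ (δ - 1) * r ^ (-2 * δ) ≤ coordWeight δ s :=
  mul_le_mul_of_nonneg_left
    (rpow_le_rpow_of_nonpos (by positivity) (max_le hr hs) (by linarith)) (by positivity)

lemma integrable_coordWeight (hδ : 0 < δ) : Integrable (coordWeight δ) := by
  have near : IntegrableOn (coordWeight δ) (Ioc 0 1) := by
    rw [← intervalIntegrable_iff_integrableOn_Ioc_of_le zero_le_one]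
    refine (intervalIntegral.intervalIntegrable_rpow' (by linarith : -1 < δ - 1)).congr ?_
    rw [uIoc_of_le zero_le_one]
    intro s hs
    simp [coordWeight_of_abs_le_one, abs_of_pos hs.1, hs.2]
  have far : IntegrableOn (coordWeight δ) (Ioi 1) := by
    refine (integrableOn_Ioi_rpow_of_lt (by linarith : -δ - 1 < -1) one_pos).congr_fun ?_
      measurableSet_Ioi
    intro s (hs : 1 < s)
    have habs : |s| = s := abs_of_pos (by linarith)
    simp only [coordWeight_of_one_le_abs (hs.le.trans_eq habs.symm), habs]
  have pos : IntegrableOn (coordWeight δ) (Ioi 0) :=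
    Ioc_union_Ioi_eq_Ioi (zero_le_one (α := ℝ)) ▸ near.union far
  have even : (fun s : ℝ ↦ coordWeight δ ‖s‖) = coordWeight δ := by
    ext s
    simp [coordWeight]
  rw [← even, integrable_fun_norm_addHaar]
  simpa using pos

end CoordWeight

section Pointwise

variable {ι : Type*} [Fintype ι] {δ p : ℝ} {v : EuclideanSpace ℝ ι}

lemma exp_neg_mul_le_rpow_neg {s t : ℝ} (hs : 0 ≤ s) (ht : 0 < t) : exp (-(s * t)) ≤ t ^ (-s) := by
  rw [rpow_def_of_pos ht, exp_le_exp]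
  nlinarith [log_le_self ht.le]

lemma exp_neg_sq_div_le_rpow {t r : ℝ} (hδ : 0 ≤ δ) (hδ1 : δ ≤ 1) (ht : t ≠ 0) (hr : 0 < r) :
    exp (-(t ^ 2 / (2 * r))) ≤ |t| ^ (δ - 1) * r ^ ((1 - δ) / 2) := by
  have hu : 0 < t ^ 2 / r := by positivity
  calc exp (-(t ^ 2 / (2 * r))) ≤ exp (-((1 - δ) / 2 * (t ^ 2 / r))) := by
        rw [exp_le_exp, neg_le_neg_iff, mul_comm 2 r, ← div_div]
        nlinarith
    _ ≤ (t ^ 2 / r) ^ (-((1 - δ) / 2)) := exp_neg_mul_le_rpow_neg (by linarith) hu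
    _ = |t| ^ (δ - 1) * r ^ ((1 - δ) / 2) := by
        rw [← sq_abs, div_rpow (by positivity) hr.le, rpow_neg hr.le, div_inv_eq_mul,
          ← rpow_natCast_mul (abs_nonneg t)]
        congr 2
        push_cast; ring

lemma sum_sq_div_le_norm_sub [DecidableEq ι] (v : EuclideanSpace ℝ ι) (i₀ : ι) :
    ∑ i ∈ Finset.univ.erase i₀, v i ^ 2 / (2 * ‖v‖) ≤ ‖v‖ - v i₀ := by
  have hle : |v i₀| ≤ ‖v‖ := PiLp.norm_apply_le v i₀
  have hsum : v i₀ ^ 2 + ∑ i ∈ Finset.univ.erase i₀, v i ^ 2 = ‖v‖ ^ 2 := by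
    rw [Finset.add_sum_erase _ (fun i ↦ v i ^ 2) (Finset.mem_univ i₀),
      EuclideanSpace.real_norm_sq_eq]
  rw [← Finset.sum_div]
  refine div_le_of_le_mul₀ (by positivity) (sub_nonneg.2 (le_of_abs_le hle)) ?_
  linarith [sq_nonneg (‖v‖ - v i₀)]

lemma exp_neg_norm_sub_le_prod [DecidableEq ι] (hδ : 0 ≤ δ) (hδ1 : δ ≤ 1) (hv : ∀ i, v i ≠ 0)
    (i₀ : ι) :
    exp (-(‖v‖ - v i₀)) ≤ ∏ i ∈ Finset.univ.erase i₀, |v i| ^ (δ - 1) * ‖v‖ ^ ((1 - δ) / 2) := by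
  have hpos : 0 < ‖v‖ := (abs_pos.2 (hv i₀)).trans_le (PiLp.norm_apply_le v i₀)
  calc exp (-(‖v‖ - v i₀)) ≤ exp (∑ i ∈ Finset.univ.erase i₀, -(v i ^ 2 / (2 * ‖v‖))) := by
        rw [Finset.sum_neg_distrib]
        gcongr
        exact sum_sq_div_le_norm_sub v i₀
    _ ≤ _ := by
        rw [exp_sum]
        gcongr with i
        exact exp_neg_sq_div_le_rpow hδ hδ1 (hv i) hpos

lemma norm_rpow_neg_le_prod_coordWeight (hδ1 : δ ≤ 1) (hp : p ≤ Fintype.card ι * (1 - δ))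
    (hv : ∀ i, v i ≠ 0) (hv0 : 0 < ‖v‖) (hv1 : ‖v‖ ≤ 1) :
    ‖v‖ ^ (-p) ≤ ∏ i, coordWeight δ (v i) := by
  have hle (i : ι) : |v i| ≤ ‖v‖ := PiLp.norm_apply_le v i
  calc ‖v‖ ^ (-p) ≤ ‖v‖ ^ ((δ - 1) * Fintype.card ι) :=
        rpow_le_rpow_of_exponent_ge hv0 hv1 (by linarith)
    _ = ∏ _i : ι, ‖v‖ ^ (δ - 1) := by
        rw [Finset.prod_const, Finset.card_univ, rpow_mul_natCast hv0.le]
    _ ≤ ∏ i, coordWeight δ (v i) := by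
        gcongr with i
        rw [coordWeight_of_abs_le_one ((hle i).trans hv1)]
        exact rpow_le_rpow_of_nonpos (abs_pos.2 (hv i)) (hle i) (by linarith)

lemma norm_rpow_neg_mul_exp_le_prod_coordWeight_of_one_le (hδ : 0 ≤ δ) (hδ1 : δ ≤ 1)
    (hp : 1 + δ + (Fintype.card ι - 1) * ((1 - δ) / 2 + 2 * δ) ≤ p) (hv : ∀ i, v i ≠ 0)
    (hv1 : 1 ≤ ‖v‖) (i₀ : ι) :
    ‖v‖ ^ (-p) * exp (-(‖v‖ - v i₀)) ≤ ∏ i, coordWeight δ (v i) := by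
  classical
  set r := ‖v‖
  have hr : 0 < r := one_pos.trans_le hv1
  have hle (i : ι) : |v i| ≤ r := PiLp.norm_apply_le v i
  have hcard : ((Finset.univ.erase i₀).card : ℝ) = Fintype.card ι - 1 := by
    rw [Finset.cast_card_erase_of_mem (Finset.mem_univ i₀), Finset.card_univ]
  have hpow : r ^ (-p) ≤ r ^ (δ - 1) * r ^ (-2 * δ) *
      ∏ _i ∈ Finset.univ.erase i₀, r ^ (-((1 - δ) / 2)) * r ^ (-2 * δ) := by
    rw [Finset.prod_const, ← rpow_add hr, ← rpow_add hr, ← rpow_mul_natCast hr.le, ← rpow_add hr,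
      hcard]
    exact rpow_le_rpow_of_exponent_le hv1 (by linarith)
  calc r ^ (-p) * exp (-(r - v i₀))
      ≤ (r ^ (δ - 1) * r ^ (-2 * δ) *
          ∏ _i ∈ Finset.univ.erase i₀, r ^ (-((1 - δ) / 2)) * r ^ (-2 * δ)) *
          ∏ i ∈ Finset.univ.erase i₀, |v i| ^ (δ - 1) * r ^ ((1 - δ) / 2) := by
        gcongr
        exact exp_neg_norm_sub_le_prod hδ hδ1 hv i₀
    _ = (r ^ (δ - 1) * r ^ (-2 * δ)) *
          ∏ i ∈ Finset.univ.erase i₀, |v i| ^ (δ - 1) * r ^ (-2 * δ) := by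
        rw [mul_assoc, ← Finset.prod_mul_distrib]
        congr! 2 with i
        rw [rpow_neg hr.le]
        field_simp
    _ ≤ coordWeight δ (v i₀) * ∏ i ∈ Finset.univ.erase i₀, coordWeight δ (v i) := by
        gcongr with i
        · exact coordWeight_nonneg _ _
        · exact (mul_le_mul_of_nonneg_right (rpow_le_rpow_of_nonpos (abs_pos.2 (hv i₀)) (hle i₀)
            (by linarith)) (by positivity)).trans (rpow_mul_rpow_le_coordWeight hδ hv1 (hle i₀))
        · exact rpow_mul_rpow_le_coordWeight hδ hv1 (hle i)
    _ = ∏ i, coordWeight δ (v i) :=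
        Finset.mul_prod_erase _ (fun i ↦ coordWeight δ (v i)) (Finset.mem_univ i₀)

lemma norm_rpow_neg_mul_exp_le_prod_coordWeight (hδ : 0 ≤ δ) (hδ1 : δ ≤ 1)
    (hp : 1 + δ + (Fintype.card ι - 1) * ((1 - δ) / 2 + 2 * δ) ≤ p)
    (hp' : p ≤ Fintype.card ι * (1 - δ)) (hv : ∀ i, v i ≠ 0) (i₀ : ι) :
    ‖v‖ ^ (-p) * exp (-(‖v‖ - v i₀)) ≤ ∏ i, coordWeight δ (v i) := by
  rcases le_total 1 ‖v‖ with h | h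
  · exact norm_rpow_neg_mul_exp_le_prod_coordWeight_of_one_le hδ hδ1 hp hv h i₀
  · have hle : |v i₀| ≤ ‖v‖ := PiLp.norm_apply_le v i₀
    have hexp : exp (-(‖v‖ - v i₀)) ≤ 1 := exp_le_one_iff.2 (by linarith [le_abs_self (v i₀)])
    exact (mul_le_of_le_one_right (by positivity) hexp).trans
      (norm_rpow_neg_le_prod_coordWeight hδ1 hp' hv ((abs_pos.2 (hv i₀)).trans_le hle) h)

lemma exists_coordWeight_exponent {n : ℝ} (hp : (n + 1) / 2 < p) (hpn : p < n) :
    ∃ δ > 0, δ ≤ 1 ∧ 1 + δ + (n - 1) * ((1 - δ) / 2 + 2 * δ) ≤ p ∧ p ≤ n * (1 - δ) := by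
  have hn : 1 < n := by linarith
  set m := min (n - p) (p - (n + 1) / 2)
  have hm : 0 < m := lt_min (by linarith) (by linarith)
  have hm₁ : m ≤ n - p := min_le_left _ _
  have hm₂ : m ≤ p - (n + 1) / 2 := min_le_right _ _
  have hδ : 0 < m / (2 * n) := by positivity
  have hδn : n * (m / (2 * n)) = m / 2 := by field_simp
  exact ⟨m / (2 * n), hδ, by rw [div_le_one (by positivity)]; linarith, by linarith, by linarith⟩

end Pointwise

section Weights

lemma rpow_le_rpow_add_one {b s t : ℝ} (hb : 0 < b) (hs : 0 ≤ s) (hst : s ≤ t) :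
    b ^ s ≤ b ^ t + 1 := by
  rcases le_total b 1 with h | h
  · exact (rpow_le_one hb.le h hs).trans (le_add_of_nonneg_left (by positivity))
  · exact (rpow_le_rpow_of_exponent_le h hst).trans (le_add_of_nonneg_right zero_le_one)

variable {α β γ p a b : ℝ}

lemma min_rpow_le (hβ : 0 ≤ β) (hβp : β ≤ p) (hpγ : p ≤ β + γ) (ha : 0 < a) (hb : 0 < b) :
    min a b ^ p ≤ a ^ β * (b ^ γ + 1) := by
  have hm : 0 < min a b := lt_min ha hb
  calc min a b ^ p = min a b ^ β * min a b ^ (p - β) := by rw [← rpow_add hm]; ring_nf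
    _ ≤ a ^ β * b ^ (p - β) := by
        gcongr
        exacts [min_le_left a b, min_le_right a b]
    _ ≤ a ^ β * (b ^ γ + 1) := by
        gcongr
        exact rpow_le_rpow_add_one hb (by linarith) (by linarith)

lemma max_rpow_mul_min_rpow_le (hα : 0 ≤ α) (hαβ : α ≤ β) (hβp : β ≤ p) (hpγ : p ≤ β + γ - α)
    (ha : 0 < a) (hb : 0 < b) :
    max a b ^ α * min a b ^ p ≤ a ^ β * (b ^ γ + 1) := by
  have hm : 0 < min a b := lt_min ha hb
  have hM : 0 < max a b := lt_max_of_lt_left ha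
  calc max a b ^ α * min a b ^ p
      = (max a b * min a b) ^ α * (min a b ^ (β - α) * min a b ^ (p - β)) := by
        rw [mul_rpow hM.le hm.le, mul_assoc, ← rpow_add hm, ← rpow_add hm]
        ring_nf
    _ ≤ (a * b) ^ α * (a ^ (β - α) * b ^ (p - β)) := by
        rw [max_mul_min]
        gcongr
        exacts [min_le_left a b, min_le_right a b]
    _ = a ^ β * b ^ (p - β + α) := by
        rw [mul_rpow ha.le hb.le, mul_mul_mul_comm, ← rpow_add ha, ← rpow_add hb]
        ring_nf
    _ ≤ a ^ β * (b ^ γ + 1) := by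
        gcongr
        exact rpow_le_rpow_add_one hb (by linarith) (by linarith)

lemma rpow_add_one_mul_min_rpow_le {R : ℝ} (hα : 0 ≤ α) (hαβ : α ≤ β) (hβp : β ≤ p)
    (hpγ : p ≤ β + γ - α) (ha : 0 < a) (hb : 0 < b) (hR : 0 ≤ R) (hRab : R ≤ a + b) :
    (R ^ α + 1) * min a b ^ p ≤ (2 ^ α + 1) * (a ^ β * (b ^ γ + 1)) := by
  have hM : 0 < max a b := lt_max_of_lt_left ha
  have hRM : R ≤ 2 * max a b := by linarith [le_max_left a b, le_max_right a b]
  calc (R ^ α + 1) * min a b ^ p ≤ ((2 * max a b) ^ α + 1) * min a b ^ p := by gcongr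
    _ = 2 ^ α * (max a b ^ α * min a b ^ p) + min a b ^ p := by
        rw [mul_rpow zero_le_two hM.le]; ring
    _ ≤ 2 ^ α * (a ^ β * (b ^ γ + 1)) + a ^ β * (b ^ γ + 1) := by
        gcongr 2 ^ α * ?_ + ?_
        · exact max_rpow_mul_min_rpow_le hα hαβ hβp hpγ ha hb
        · exact min_rpow_le (hα.trans hαβ) hβp (by linarith) ha hb
    _ = (2 ^ α + 1) * (a ^ β * (b ^ γ + 1)) := by ring

lemma exists_kernel_exponent {l n q : ℝ} (hln : l < n) (hlq : l < q) (hβn : β < n) (hβq : β ≤ q) :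
    ∃ p, l < p ∧ p < n ∧ β ≤ p ∧ p ≤ q := by
  obtain ⟨r, hlr, hr⟩ := exists_between (lt_min hln hlq)
  exact ⟨max β r, lt_max_of_lt_right hlr, max_lt hβn (lt_min_iff.1 hr).1, le_max_left _ _,
    max_le hβq (lt_min_iff.1 hr).2.le⟩

end Weights

section InnerProductSpace

variable {E : Type*} [NormedAddCommGroup E] [InnerProductSpace ℝ E]

lemma exists_norm_eq_one_inner_eq_norm [CompleteSpace E] [Nontrivial E] (x : E) :
    ∃ e : E, ‖e‖ = 1 ∧ ⟪e, x⟫ = ‖x‖ := by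
  obtain ⟨g, hg, hgx⟩ := exists_dual_vector' ℝ x
  exact ⟨(InnerProductSpace.toDual ℝ E).symm g, by simpa using hg, by simpa using hgx⟩

lemma tiltedKernel_nonneg (p : ℝ) (e y : E) : 0 ≤ tiltedKernel p e y := by
  unfold tiltedKernel; positivity

lemma inner_le_norm_of_norm_eq_one {e : E} (he : ‖e‖ = 1) (y : E) : ⟪e, y⟫ ≤ ‖y‖ := by
  simpa [he] using real_inner_le_norm e y

lemma min_norm_rpow_mul_exp_le_tiltedKernel_add {p : ℝ} {e x : E} (he : ‖e‖ = 1)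
    (hex : ⟪e, x⟫ = ‖x‖) (y : E) :
    min ‖x - y‖ ‖y‖ ^ (-p) * exp (-(‖x - y‖ + ‖y‖ - ‖x‖)) ≤
      tiltedKernel p e y + tiltedKernel p e (x - y) := by
  have hy := inner_le_norm_of_norm_eq_one he y
  have hxy := inner_le_norm_of_norm_eq_one he (x - y)
  have hinner : ⟪e, x - y⟫ = ‖x‖ - ⟪e, y⟫ := by rw [inner_sub_right, hex]
  rcases le_total ‖x - y‖ ‖y‖ with h | h
  · rw [min_eq_left h]
    refine le_add_of_nonneg_of_le (tiltedKernel_nonneg p e y) ?_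
    unfold tiltedKernel
    gcongr _ * exp ?_
    linarith
  · rw [min_eq_right h]
    refine le_add_of_le_of_nonneg ?_ (tiltedKernel_nonneg p e (x - y))
    unfold tiltedKernel
    gcongr _ * exp ?_
    linarith

lemma convolution_integrand_le_tiltedKernel_add {α β γ p : ℝ} {e x y : E} (hα : 0 ≤ α)
    (hαβ : α ≤ β) (hβp : β ≤ p) (hpγ : p ≤ β + γ - α) (he : ‖e‖ = 1) (hex : ⟪e, x⟫ = ‖x‖)
    (hy : y ≠ 0) (hyx : y ≠ x) :
    exp (-‖x - y‖) / ‖x - y‖ ^ β * (exp (-‖y‖) / (‖y‖ ^ γ + 1)) ≤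
      (2 ^ α + 1) * exp (-‖x‖) / (‖x‖ ^ α + 1) *
        (tiltedKernel p e y + tiltedKernel p e (x - y)) := by
  have ha : 0 < ‖x - y‖ := norm_pos_iff.2 (sub_ne_zero.2 hyx.symm)
  have hb : 0 < ‖y‖ := norm_pos_iff.2 hy
  have hm : 0 < min ‖x - y‖ ‖y‖ := lt_min ha hb
  have tri : ‖x‖ ≤ ‖x - y‖ + ‖y‖ := by simpa using norm_add_le (x - y) y
  have powers : (‖x - y‖ ^ β * (‖y‖ ^ γ + 1))⁻¹ ≤
      (2 ^ α + 1) / (‖x‖ ^ α + 1) * min ‖x - y‖ ‖y‖ ^ (-p) := by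
    rw [rpow_neg hm.le, ← div_eq_mul_inv, div_div, inv_eq_one_div,
      div_le_div_iff₀ (by positivity) (by positivity), one_mul]
    exact rpow_add_one_mul_min_rpow_le hα hαβ hβp hpγ ha hb (norm_nonneg x) tri
  have exps : exp (-‖x - y‖) * exp (-‖y‖) =
      exp (-‖x‖) * exp (-(‖x - y‖ + ‖y‖ - ‖x‖)) := by
    rw [← exp_add, ← exp_add]
    ring_nf
  calc exp (-‖x - y‖) / ‖x - y‖ ^ β * (exp (-‖y‖) / (‖y‖ ^ γ + 1))
      = exp (-‖x‖) * exp (-(‖x - y‖ + ‖y‖ - ‖x‖)) * (‖x - y‖ ^ β * (‖y‖ ^ γ + 1))⁻¹ := by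
        rw [div_mul_div_comm, exps, div_eq_mul_inv]
    _ ≤ exp (-‖x‖) * exp (-(‖x - y‖ + ‖y‖ - ‖x‖)) *
          ((2 ^ α + 1) / (‖x‖ ^ α + 1) * min ‖x - y‖ ‖y‖ ^ (-p)) := by gcongr
    _ = (2 ^ α + 1) * exp (-‖x‖) / (‖x‖ ^ α + 1) *
          (min ‖x - y‖ ‖y‖ ^ (-p) * exp (-(‖x - y‖ + ‖y‖ - ‖x‖))) := by ring
    _ ≤ _ := by
        gcongr
        exact min_norm_rpow_mul_exp_le_tiltedKernel_add he hex y

variable [FiniteDimensional ℝ E]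

lemma exists_orthonormalBasis_apply_eq {e : E} (he : ‖e‖ = 1) :
    ∃ (u : Finset E) (b : OrthonormalBasis u ℝ E) (i₀ : u), b i₀ = e := by
  have hon : Orthonormal ℝ ((↑) : ({e} : Set E) → E) :=
    orthonormal_subsingleton_iff.2 fun i ↦ by rw [i.2, he]
  obtain ⟨u, b, heu, hb⟩ := hon.exists_orthonormalBasis_extension
  exact ⟨u, b, ⟨e, heu rfl⟩, congrFun hb _⟩

variable [MeasurableSpace E] [BorelSpace E]

section Coordinates

variable {ι : Type*} [Fintype ι] (b : OrthonormalBasis ι ℝ E)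

lemma measurePreserving_ofLp_repr :
    MeasurePreserving (b.measurableEquiv.trans (MeasurableEquiv.toLp 2 (ι → ℝ)).symm) :=
  b.measurePreserving_measurableEquiv.trans (PiLp.volume_preserving_ofLp ι)

lemma integrable_prod_comp_repr {f : ℝ → ℝ} (hf : Integrable f) :
    Integrable fun y ↦ ∏ i, f (b.repr y i) :=
  (measurePreserving_ofLp_repr b).integrable_comp_of_integrable
    (Integrable.fintype_prod fun _ ↦ hf)

lemma integral_prod_comp_repr (f : ℝ → ℝ) :
    ∫ y, ∏ i, f (b.repr y i) = (∫ s, f s) ^ finrank ℝ E := by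
  rw [finrank_eq_card_basis b.toBasis, ← integral_fintype_prod_volume_eq_pow]
  exact (measurePreserving_ofLp_repr b).integral_comp' fun v ↦ ∏ i, f (v i)

lemma ae_repr_ne_zero : ∀ᵐ y, ∀ i, b.repr y i ≠ 0 :=
  ae_all_iff.2 fun i ↦ (measurePreserving_ofLp_repr b).quasiMeasurePreserving.ae
    (Measure.ae_eval_ne (μ := fun _ : ι ↦ (volume : Measure ℝ)) i 0)

end Coordinates

lemma measurable_tiltedKernel (p : ℝ) (e : E) : Measurable (tiltedKernel p e) := by
  unfold tiltedKernel; fun_prop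

lemma exists_integral_tiltedKernel_le {p : ℝ} (hp : ((finrank ℝ E : ℝ) + 1) / 2 < p)
    (hpn : p < finrank ℝ E) :
    ∃ M > (0 : ℝ), ∀ e : E, ‖e‖ = 1 →
      Integrable (tiltedKernel p e) ∧ ∫ y, tiltedKernel p e y ≤ M := by
  obtain ⟨δ, hδ, hδ1, hpδ, hpδ'⟩ := exists_coordWeight_exponent hp hpn
  have hI : 0 ≤ ∫ s, coordWeight δ s := integral_nonneg (coordWeight_nonneg δ)
  refine ⟨(∫ s, coordWeight δ s) ^ finrank ℝ E + 1, by positivity, fun e he ↦ ?_⟩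
  obtain ⟨u, b, i₀, rfl⟩ := exists_orthonormalBasis_apply_eq he
  rw [finrank_eq_card_basis b.toBasis] at hpδ hpδ'
  have hle : ∀ᵐ y, tiltedKernel p (b i₀) y ≤ ∏ i, coordWeight δ (b.repr y i) := by
    filter_upwards [ae_repr_ne_zero b] with y hy
    simpa only [tiltedKernel, b.repr.norm_map, b.repr_apply_apply] using
      norm_rpow_neg_mul_exp_le_prod_coordWeight hδ.le hδ1 hpδ hpδ' hy i₀
  have hprod := integrable_prod_comp_repr b (integrable_coordWeight hδ)
  have hint : Integrable (tiltedKernel p (b i₀)) :=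
    hprod.mono' (measurable_tiltedKernel p _).aestronglyMeasurable <| by
      simpa only [norm_of_nonneg (tiltedKernel_nonneg _ _ _)] using hle
  refine ⟨hint, (integral_mono_ae hint hprod hle).trans ?_⟩
  rw [integral_prod_comp_repr]
  exact le_add_of_nonneg_right zero_le_one

theorem stmt13_general {α β γ : ℝ} (hE : 1 < finrank ℝ E) (hα : 0 ≤ α) (hαβ : α ≤ β) (hαγ : α ≤ γ)
    (hβ : β < finrank ℝ E) (hβγ : ((finrank ℝ E : ℝ) + 1) / 2 < β + γ - α) :
    ∃ C > (0 : ℝ), ∀ x : E,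
      Integrable (fun y : E ↦ exp (-‖x - y‖) / ‖x - y‖ ^ β * (exp (-‖y‖) / (‖y‖ ^ γ + 1))) ∧
      ∫ y : E, exp (-‖x - y‖) / ‖x - y‖ ^ β * (exp (-‖y‖) / (‖y‖ ^ γ + 1)) ≤
        C * exp (-‖x‖) / (‖x‖ ^ α + 1) := by
  have hE' : (1 : ℝ) < finrank ℝ E := mod_cast hE
  have : Nontrivial E := nontrivial_of_finrank_pos (R := ℝ) (by lia)
  obtain ⟨p, hp, hpn, hβp, hpγ⟩ := exists_kernel_exponent (q := β + γ - α)
    (by linarith : ((finrank ℝ E : ℝ) + 1) / 2 < finrank ℝ E) hβγ hβ (by linarith)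
  obtain ⟨M, hM, hk⟩ := exists_integral_tiltedKernel_le hp hpn
  refine ⟨(2 ^ α + 1) * (M + M), by positivity, fun x ↦ ?_⟩
  obtain ⟨e, he, hex⟩ := exists_norm_eq_one_inner_eq_norm x
  obtain ⟨hk_int, hkM⟩ := hk e he
  have hk_int' : Integrable fun y ↦ tiltedKernel p e (x - y) := hk_int.comp_sub_left x
  have hbound := (hk_int.fun_add hk_int').const_mul ((2 ^ α + 1) * exp (-‖x‖) / (‖x‖ ^ α + 1))
  have hle : ∀ᵐ y, exp (-‖x - y‖) / ‖x - y‖ ^ β * (exp (-‖y‖) / (‖y‖ ^ γ + 1)) ≤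
      (2 ^ α + 1) * exp (-‖x‖) / (‖x‖ ^ α + 1) *
        (tiltedKernel p e y + tiltedKernel p e (x - y)) := by
    filter_upwards [Measure.ae_ne volume 0, Measure.ae_ne volume x] with y hy hyx
    exact convolution_integrand_le_tiltedKernel_add hα hαβ hβp hpγ he hex hy hyx
  have hint : Integrable fun y : E ↦
      exp (-‖x - y‖) / ‖x - y‖ ^ β * (exp (-‖y‖) / (‖y‖ ^ γ + 1)) := by
    refine hbound.mono' (Measurable.aestronglyMeasurable (by fun_prop)) ?_
    filter_upwards [hle] with y hy
    rwa [norm_of_nonneg (by positivity)]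
  refine ⟨hint, (integral_mono_ae hint hbound hle).trans ?_⟩
  rw [integral_const_mul, integral_add hk_int hk_int', integral_sub_left_eq_self (tiltedKernel p e)]
  calc _ ≤ (2 ^ α + 1) * exp (-‖x‖) / (‖x‖ ^ α + 1) * (M + M) := by gcongr
    _ = _ := by ring

end InnerProductSpace

end

theorem stmt13 (ε : ℝ) (hε : 0 < ε) :
    ∃ C > (0 : ℝ), ∀ x : EuclideanSpace ℝ (Fin 3),
      (∫ y : EuclideanSpace ℝ (Fin 3),
          (Real.exp (-‖x - y‖) / ‖x - y‖ ^ 2) *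
          (Real.exp (-‖y‖) / (‖y‖ ^ (1.5 + ε : ℝ) + 1))) ≤
        C * Real.exp (-‖x‖) / (‖x‖ ^ (1.5 : ℝ) + 1) := by
  obtain ⟨C, hC, h⟩ := stmt13_general (E := EuclideanSpace ℝ (Fin 3)) (α := 1.5) (β := 2)
    (γ := 1.5 + ε) (by simp) (by norm_num) (by norm_num) (by linarith) (by norm_num)
    (by rw [finrank_euclideanSpace_fin]; push_cast; linarith)
  exact ⟨C, hC, fun x ↦ by simpa only [rpow_two] using (h x).2⟩
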